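/- arXiv:2310.06270 — 2 statements merged into one kernel-verified Lean document; each statement's English description precedes it below -/
import Mathlib

section
/- Let ε > 0, ν > 0, and let T > 1 be real (so 0 < log T < T). If p is a real number with 0 < p ≤ (1/2)·( (ε² − ν) + √( (ε² − ν)² + 4νε²(1 + log(T / log T)) ) ), then p · ((log T)/T)^{ν/(ν+p)} ≤ ε², i.e., √( p · ((log T)/T)^{ν/(ν+p)} ) ≤ ε. -/
/-!
Write `x = T / log T` and `b = ε²`. As `p` lies between the roots of the quadratic,
`p (ν + p) ≤ b (ν + p + ν log x)`, that is, `p ≤ b (1 + a log x)` with `a = ν / (ν + p)`, and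
`1 + a log x = 1 + log (x ^ a) ≤ x ^ a`.
-/

lemma sq_le_mul_add_of_le_root {b c p : ℝ} (hc : 0 ≤ c) (hp : 0 ≤ p)
    (hroot : p ≤ (b + √(b ^ 2 + 4 * c)) / 2) : p ^ 2 ≤ b * p + c := by
  have hb : b ≤ √(b ^ 2 + 4 * c) := Real.le_sqrt_of_sq_le (by linarith)
  have habs : |2 * p - b| ≤ √(b ^ 2 + 4 * c) := abs_le.2 ⟨by linarith, by linarith⟩
  have hsq : (2 * p - b) ^ 2 ≤ b ^ 2 + 4 * c := by
    simpa only [sq_abs] using (Real.le_sqrt (abs_nonneg _) (by positivity)).1 habs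
  linarith

lemma one_add_mul_log_le_rpow {x : ℝ} (hx : 0 < x) (a : ℝ) : 1 + a * Real.log x ≤ x ^ a := by
  rw [← Real.log_rpow hx]
  linarith [Real.log_le_sub_one_of_pos (Real.rpow_pos_of_pos hx a)]

lemma le_mul_rpow_of_sq_le {b ν x p : ℝ} (hb : 0 ≤ b) (hνp : 0 < ν + p) (hx : 0 < x)
    (hquad : p ^ 2 ≤ (b - ν) * p + ν * b * (1 + Real.log x)) :
    p ≤ b * x ^ (ν / (ν + p)) :=
  calc p ≤ b * (ν + p + ν * Real.log x) / (ν + p) := by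
        rw [le_div_iff₀ hνp]
        linarith
    _ = b * (1 + ν / (ν + p) * Real.log x) := by field_simp
    _ ≤ b * x ^ (ν / (ν + p)) := by gcongr; exact one_add_mul_log_le_rpow hx _

lemma one_le_div_log {T : ℝ} (hT : 1 < T) : 1 ≤ T / Real.log T :=
  (one_le_div (Real.log_pos hT)).2 (Real.log_le_self (by linarith))

-- `exp (-1) ≤ x` says `0 ≤ 1 + log x`: the quadratic then has roots of opposite signs, so that
-- positivity of `p` keeps it above the smaller one.
theorem stmt_10_general {b ν x p : ℝ} (hb : 0 ≤ b) (hν : 0 ≤ ν) (hx : Real.exp (-1) ≤ x)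
    (hp : 0 < p)
    (hple : p ≤ (1 / 2) * ((b - ν) + √((b - ν) ^ 2 + 4 * ν * b * (1 + Real.log x)))) :
    p * x⁻¹ ^ (ν / (ν + p)) ≤ b := by
  have hx_pos : 0 < x := (Real.exp_pos _).trans_le hx
  have hlog : 0 ≤ 1 + Real.log x := by linarith [(Real.le_log_iff_exp_le hx_pos).2 hx]
  have hquad : p ^ 2 ≤ (b - ν) * p + ν * b * (1 + Real.log x) :=
    sq_le_mul_add_of_le_root (by positivity) hp.le (by simp only [← mul_assoc]; linarith)
  rw [Real.inv_rpow hx_pos.le, ← div_eq_mul_inv, div_le_iff₀ (Real.rpow_pos_of_pos hx_pos _)]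
  exact le_mul_rpow_of_sq_le hb (by positivity) hx_pos hquad

/-- If `0 < p` is at most the explicit root of the quadratic
`p² − (ε²−ν)p − νε²(1 + log(T/log T))`, then `p·((log T)/T)^{ν/(ν+p)} ≤ ε²`, i.e.,
`√(p·((log T)/T)^{ν/(ν+p)}) ≤ ε`. -/
theorem stmt_10 (ε ν T p : ℝ) (hε : 0 < ε) (hν : 0 < ν) (hT : 1 < T) (hp : 0 < p)
    (hple : p ≤ (1 / 2) * ((ε ^ 2 - ν) +
      Real.sqrt ((ε ^ 2 - ν) ^ 2 + 4 * ν * ε ^ 2 * (1 + Real.log (T / Real.log T))))) :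
    p * (Real.log T / T) ^ (ν / (ν + p)) ≤ ε ^ 2 ∧
      Real.sqrt (p * (Real.log T / T) ^ (ν / (ν + p))) ≤ ε := by
  have hexp : Real.exp (-1) ≤ T / Real.log T :=
    (Real.exp_le_one_iff.2 (by norm_num)).trans (one_le_div_log hT)
  have hbound : p * (Real.log T / T) ^ (ν / (ν + p)) ≤ ε ^ 2 := by
    simpa only [inv_div] using stmt_10_general (sq_nonneg ε) hν.le hexp hp hple
  exact ⟨hbound, Real.sqrt_le_iff.2 ⟨hε.le, hbound⟩⟩
end

section
/- Let T ≥ 1 be an integer and M > 0 a real number. Let f* ∈ ℝ, and for each t ∈ {1, …, T} let f_t ∈ ℝ, σ_t ∈ [0, 1], and η_t ≥ 0, with η_1 ≤ η_2 ≤ … ≤ η_T. Suppose that for every t ∈ {1, …, T}: f* − f_t ≤ 2√(η_t)·σ_t + 1/t². Set g_T = (1/2)·Σ_{t=1}^T log(1 + 4M σ_t²) and c₀ = 8 / log(1 + 4M). Then f* − max_{1 ≤ t ≤ T} f_t ≤ (1/T)·( √(c₀ · T · η_T · g_T) + π²/6 ). -/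
/-!
The error `f* − max f` is at most every per-step gap, hence at most the average of the per-step
bounds. The terms `1/t²` sum to at most `ζ(2) = π²/6`. For the main terms, the Cauchy–Schwarz
inequality gives `(∑ √η_t σ_t)² ≤ T H ∑ σ_t²` whenever every `η_t` is at most `H`, and concavity of
the logarithm, in the form of Bernoulli's inequality for exponents in `[0, 1]`, bounds `σ_t²` by
`log (1 + 4Mσ_t²) / log (1 + 4M)`.
-/

lemma sub_sup'_le_sum_div_card {ι K : Type*} [Field K] [LinearOrder K] [IsStrictOrderedRing K]
    {s : Finset ι} (hs : s.Nonempty) {a : K} {f b : ι → K}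
    (h : ∀ i ∈ s, a - f i ≤ b i) : a - s.sup' hs f ≤ (∑ i ∈ s, b i) / s.card := by
  rw [le_div_iff₀' (Nat.cast_pos.mpr hs.card_pos), ← nsmul_eq_mul]
  exact s.card_nsmul_le_sum b _ fun i hi =>
    (sub_le_sub_left (Finset.le_sup' f hi) a).trans (h i hi)

lemma sq_sum_mul_le_card_mul_mul_sum_sq {ι R : Type*} [CommRing R] [LinearOrder R]
    [IsStrictOrderedRing R] {s : Finset ι} {w x : ι → R} {H : R} (hw : ∀ i ∈ s, w i ^ 2 ≤ H) :
    (∑ i ∈ s, w i * x i) ^ 2 ≤ s.card * H * ∑ i ∈ s, x i ^ 2 :=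
  calc (∑ i ∈ s, w i * x i) ^ 2
      ≤ s.card * ∑ i ∈ s, (w i * x i) ^ 2 := sq_sum_le_card_mul_sum_sq
    _ ≤ s.card * ∑ i ∈ s, H * x i ^ 2 := by
        gcongr with i hi
        rw [mul_pow]
        gcongr
        exact hw i hi
    _ = s.card * H * ∑ i ∈ s, x i ^ 2 := by rw [← Finset.mul_sum, mul_assoc]

lemma sum_one_div_add_one_sq_le (s : Finset ℕ) :
    ∑ n ∈ s, 1 / ((n : ℝ) + 1) ^ 2 ≤ Real.pi ^ 2 / 6 := by
  have hasSum_shift : HasSum (fun n : ℕ => 1 / ((n : ℝ) + 1) ^ 2) (Real.pi ^ 2 / 6) := by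
    -- the term of `hasSum_zeta_two` at `n = 0` is the junk value `1 / 0 = 0`
    simpa using (hasSum_nat_add_iff' 1).mpr hasSum_zeta_two
  exact sum_le_hasSum s (fun n _ => by positivity) hasSum_shift

lemma mul_log_one_add_le_log_one_add_mul {c p : ℝ} (hc : -1 < c) (hp₀ : 0 ≤ p) (hp₁ : p ≤ 1) :
    p * Real.log (1 + c) ≤ Real.log (1 + p * c) := by
  have hpos : 0 < 1 + c := by linarith
  rw [← Real.log_rpow hpos]
  exact Real.log_le_log (Real.rpow_pos_of_pos hpos p)
    (rpow_one_add_le_one_add_mul_self hc.le hp₀ hp₁)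

section InformationGain

variable {ι : Type*} {s : Finset ι} {c : ℝ} {σ : ι → ℝ}

lemma sum_sq_le_sum_log_div_log (hc : 0 < c) (hσ : ∀ i ∈ s, |σ i| ≤ 1) :
    ∑ i ∈ s, σ i ^ 2 ≤ (∑ i ∈ s, Real.log (1 + c * σ i ^ 2)) / Real.log (1 + c) := by
  rw [le_div_iff₀ (Real.log_pos (by linarith)), Finset.sum_mul]
  refine Finset.sum_le_sum fun i hi => ?_
  rw [mul_comm c]
  exact mul_log_one_add_le_log_one_add_mul (by linarith) (sq_nonneg _)
    ((sq_le_one_iff_abs_le_one _).mpr (hσ i hi))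

lemma sq_sum_sqrt_mul_le_sum_log_div_log {η : ι → ℝ} {H : ℝ} (hc : 0 < c)
    (hσ : ∀ i ∈ s, |σ i| ≤ 1) (hη : ∀ i ∈ s, 0 ≤ η i) (hH : ∀ i ∈ s, η i ≤ H) :
    (∑ i ∈ s, √(η i) * σ i) ^ 2 ≤
      s.card * H * ((∑ i ∈ s, Real.log (1 + c * σ i ^ 2)) / Real.log (1 + c)) := by
  rcases s.eq_empty_or_nonempty with rfl | ⟨i, hi⟩
  · simp
  have H_nonneg : 0 ≤ H := (hη i hi).trans (hH i hi)
  calc (∑ i ∈ s, √(η i) * σ i) ^ 2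
      ≤ s.card * H * ∑ i ∈ s, σ i ^ 2 :=
        sq_sum_mul_le_card_mul_mul_sum_sq fun j hj => (Real.sq_sqrt (hη j hj)).trans_le (hH j hj)
    _ ≤ _ := by
        gcongr
        exact sum_sq_le_sum_log_div_log hc hσ

end InformationGain

theorem stmt_15_general {T : ℕ} (hT : 0 < T) {M : ℝ} (hM : 0 < M) {fstar H : ℝ}
    {f σ η : Fin T → ℝ} (hσ : ∀ t, |σ t| ≤ 1) (hη : ∀ t, 0 ≤ η t) (hH : ∀ t, η t ≤ H)
    (hstep : ∀ t : Fin T, fstar - f t ≤ 2 * √(η t) * σ t + 1 / (((t : ℕ) : ℝ) + 1) ^ 2) :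
    fstar - Finset.univ.sup' (Finset.univ_nonempty_iff.mpr (Fin.pos_iff_nonempty.mp hT)) f ≤
      (1 / (T : ℝ)) *
        (√((8 / Real.log (1 + 4 * M)) * T * H *
            ((1 / 2) * ∑ t, Real.log (1 + 4 * M * (σ t) ^ 2))) +
          Real.pi ^ 2 / 6) := by
  have sum_width_le : ∑ t, 2 * √(η t) * σ t ≤ √((8 / Real.log (1 + 4 * M)) * T * H *
      ((1 / 2) * ∑ t, Real.log (1 + 4 * M * (σ t) ^ 2))) := by
    have sq_sum_le := sq_sum_sqrt_mul_le_sum_log_div_log (s := Finset.univ)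
      (mul_pos four_pos hM) (fun t _ => hσ t) (fun t _ => hη t) (fun t _ => hH t)
    rw [Finset.card_fin] at sq_sum_le
    apply Real.le_sqrt_of_sq_le
    simp only [mul_assoc (2 : ℝ), ← Finset.mul_sum, mul_pow]
    linear_combination 4 * sq_sum_le
  have sum_slack_le : ∑ t : Fin T, 1 / (((t : ℕ) : ℝ) + 1) ^ 2 ≤ Real.pi ^ 2 / 6 := by
    rw [Fin.sum_univ_eq_sum_range (fun n : ℕ => 1 / ((n : ℝ) + 1) ^ 2)]
    exact sum_one_div_add_one_sq_le _
  refine (sub_sup'_le_sum_div_card _ fun t _ => hstep t).trans ?_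
  rw [Finset.card_fin, Finset.sum_add_distrib, one_div_mul_eq_div]
  gcongr

/-- Deterministic aggregation of per-step upper confidence bounds: if for each step `t`
`f* − f_t ≤ 2√(η_t)·σ_t + 1/t²` with nondecreasing `η_t ≥ 0` and `σ_t ∈ [0,1]`, then
`f* − max_t f_t ≤ (1/T)(√(c₀ T η_T g_T) + π²/6)` where
`g_T = (1/2)Σ_t log(1 + 4Mσ_t²)` and `c₀ = 8/log(1+4M)`. -/
theorem stmt_15 (T : ℕ) (hT : 0 < T) (M : ℝ) (hM : 0 < M) (fstar : ℝ)
    (f σ η : Fin T → ℝ)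
    (hσ : ∀ t, σ t ∈ Set.Icc (0 : ℝ) 1) (hη : ∀ t, 0 ≤ η t) (hmono : Monotone η)
    (hstep : ∀ t : Fin T, fstar - f t ≤
      2 * Real.sqrt (η t) * σ t + 1 / (((t : ℕ) : ℝ) + 1) ^ 2) :
    fstar - Finset.univ.sup' (Finset.univ_nonempty_iff.mpr (Fin.pos_iff_nonempty.mp hT)) f ≤
      (1 / (T : ℝ)) *
        (Real.sqrt ((8 / Real.log (1 + 4 * M)) * T * η ⟨T - 1, by omega⟩ *
            ((1 / 2) * ∑ t, Real.log (1 + 4 * M * (σ t) ^ 2))) +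
          Real.pi ^ 2 / 6) := by
  have hlast : ∀ t, η t ≤ η ⟨T - 1, by omega⟩ := fun t => hmono (Nat.le_sub_one_of_lt t.isLt)
  exact stmt_15_general hT hM (fun t => (abs_of_nonneg (hσ t).1).trans_le (hσ t).2) hη hlast hstep
end
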